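/- Let A = (a_ij) be an n×n nonnegative matrix and B = (b_ij) a doubly stochastic n×n matrix with the support of B contained in the support of A. Then Per(A) ≥ ∏_{i,j} (1-b_ij)^{1-b_ij} · exp(-∑_{i,j} b_ij · log(b_ij / a_ij)), where terms with b_ij = 0 contribute 0 to the sum. -/

import Mathlib

open scoped BigOperators

noncomputable def perm {n : ℕ} (A : Matrix (Fin n) (Fin n) ℝ) : ℝ :=
  ∑ σ : Equiv.Perm (Fin n), ∏ i, A i (σ i)

/-!
For a doubly stochastic `b`, weighted AM-GM in each row and column bounds
`(∏ i, ∑ j, y i j) * ∏ j, ∑ i, z i j` from below by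
`∏ i, ∏ j, (y i j / b i j) ^ b i j * (z i j / b i j) ^ b i j`. The left side counts matchings of
the bipartite graph without edges, with the row and column sums as weights of uncovered vertices.
Give the graph the edge `(i, j)` of weight `a i j`, one pair at a time, and simultaneously set
`y i j` and `z i j` to `0`. Each such step replaces the factor `(y / b) ^ b * (z / b) ^ b` of the
lower bound by `(a / b) ^ b * (1 - b) ^ (1 - b)`: as a function of `u = y i j` and `v = z i j`,
the matching sum before the step is `p + u * q + v * r + u * v * s` with `q * r ≤ p * s`, and
after it `p + a i j * s`. In the end uncovered vertices have weight `0`, so only perfect matchings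
count and the matching sum is the permanent of `a`.
-/

open Finset

section Matching

variable {α β K : Type*} [DecidableEq α] [DecidableEq β]

open Classical in
/-- The matchings between `R` and `C`: sets of edges in `R ×ˢ C`, no two of which share an
endpoint. They need not cover `R` or `C`. -/
noncomputable def matchings (R : Finset α) (C : Finset β) : Finset (Finset (α × β)) :=
  {M ∈ (R ×ˢ C).powerset | Set.InjOn Prod.fst (M : Set (α × β)) ∧
    Set.InjOn Prod.snd (M : Set (α × β))}

theorem mem_matchings {R : Finset α} {C : Finset β} {M : Finset (α × β)} :
    M ∈ matchings R C ↔ M ⊆ R ×ˢ C ∧ Set.InjOn Prod.fst (M : Set (α × β)) ∧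
      Set.InjOn Prod.snd (M : Set (α × β)) := by
  simp only [matchings, mem_filter, mem_powerset]

theorem notMem_of_mem_matchings_erase {R : Finset α} {C : Finset β} {M : Finset (α × β)} {i : α}
    (hM : M ∈ matchings (R.erase i) C) (k : β) : (i, k) ∉ M := fun hik =>
  notMem_erase i R (mem_product.mp ((mem_matchings.mp hM).1 hik)).1

theorem erase_mem_matchings {R : Finset α} {C : Finset β} {M : Finset (α × β)} {i : α} {k : β}
    (hM : M ∈ matchings R C) (hik : (i, k) ∈ M) :
    M.erase (i, k) ∈ matchings (R.erase i) (C.erase k) := by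
  obtain ⟨hRC, hfst, hsnd⟩ := mem_matchings.mp hM
  refine mem_matchings.mpr ⟨fun e he => ?_, hfst.mono (by simp), hsnd.mono (by simp)⟩
  obtain ⟨hne, heM⟩ := mem_erase.mp he
  obtain ⟨heR, heC⟩ := mem_product.mp (hRC heM)
  exact mem_product.mpr ⟨mem_erase.mpr ⟨fun h => hne (hfst heM hik h), heR⟩,
    mem_erase.mpr ⟨fun h => hne (hsnd heM hik h), heC⟩⟩

theorem insert_mem_matchings {R : Finset α} {C : Finset β} {M : Finset (α × β)} {i : α} {k : β}
    (hi : i ∈ R) (hk : k ∈ C) (hM : M ∈ matchings (R.erase i) (C.erase k)) :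
    insert (i, k) M ∈ matchings R C := by
  have hik : (i, k) ∉ (M : Set (α × β)) := notMem_of_mem_matchings_erase hM k
  obtain ⟨hRC, hfst, hsnd⟩ := mem_matchings.mp hM
  rw [mem_matchings, coe_insert, Set.injOn_insert hik, Set.injOn_insert hik]
  exact ⟨by grind, ⟨hfst, by grind⟩, hsnd, by grind⟩

theorem matchings_eq_union_biUnion {R : Finset α} (C : Finset β) {i : α} (hi : i ∈ R) :
    matchings R C = matchings (R.erase i) C ∪
      C.biUnion fun k => (matchings (R.erase i) (C.erase k)).image (insert (i, k)) := by
  ext M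
  simp only [mem_union, mem_biUnion, mem_image]
  constructor
  · intro hM
    obtain ⟨hRC, hfst, hsnd⟩ := mem_matchings.mp hM
    by_cases h : ∃ k, (i, k) ∈ M
    · obtain ⟨k, hik⟩ := h
      exact Or.inr ⟨k, (mem_product.mp (hRC hik)).2, M.erase (i, k),
        erase_mem_matchings hM hik, insert_erase hik⟩
    · exact Or.inl (mem_matchings.mpr ⟨by grind, hfst, hsnd⟩)
  · rintro (hM | ⟨k, hk, M, hM, rfl⟩)
    · obtain ⟨hRC, hinj⟩ := mem_matchings.mp hM
      exact mem_matchings.mpr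
        ⟨hRC.trans (product_subset_product_left (erase_subset i R)), hinj⟩
    · exact insert_mem_matchings hi hk hM

section CommSemiring

variable [CommSemiring K] (w : α × β → K) (r : α → K) (c : β → K)

/-- The weight of `M` as a matching between `R` and `C`: an edge `e` of `M` contributes `w e`, and
the vertices that `M` leaves uncovered contribute `r i` (in `R`) and `c j` (in `C`). -/
def matchingWeight (R : Finset α) (C : Finset β) (M : Finset (α × β)) : K :=
  (∏ e ∈ M, w e) * ((∏ i ∈ R \ M.image Prod.fst, r i) * ∏ j ∈ C \ M.image Prod.snd, c j)

/-- The total weight of the matchings between `R` and `C`: the matching polynomial with a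
separate variable for every edge and every uncovered vertex. -/
noncomputable def matchingSum (R : Finset α) (C : Finset β) : K :=
  ∑ M ∈ matchings R C, matchingWeight w r c R C M

theorem matchingWeight_eq_mul_erase {R : Finset α} {C : Finset β} {M : Finset (α × β)} {i : α}
    (hi : i ∈ R) (hM : M ∈ matchings (R.erase i) C) :
    matchingWeight w r c R C M = r i * matchingWeight w r c (R.erase i) C M := by
  have hiM : i ∉ M.image Prod.fst := by
    simpa using notMem_of_mem_matchings_erase hM
  rw [matchingWeight, matchingWeight, erase_sdiff_comm,
    ← mul_prod_erase _ r (mem_sdiff.mpr ⟨hi, hiM⟩)]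
  ring

theorem matchingWeight_insert {R : Finset α} {C : Finset β} {M : Finset (α × β)} {i : α} {k : β}
    (hM : M ∈ matchings (R.erase i) (C.erase k)) :
    matchingWeight w r c R C (insert (i, k) M) =
      w (i, k) * matchingWeight w r c (R.erase i) (C.erase k) M := by
  rw [matchingWeight, matchingWeight, prod_insert (notMem_of_mem_matchings_erase hM k),
    image_insert, image_insert, sdiff_insert, sdiff_insert, erase_sdiff_comm, erase_sdiff_comm,
    mul_assoc]

theorem matchingSum_row {R : Finset α} (C : Finset β) {i : α} (hi : i ∈ R) :
    matchingSum w r c R C = r i * matchingSum w r c (R.erase i) C +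
      ∑ k ∈ C, w (i, k) * matchingSum w r c (R.erase i) (C.erase k) := by
  rw [matchingSum, matchings_eq_union_biUnion C hi, sum_union, sum_biUnion]
  · congr 1
    · rw [matchingSum, mul_sum]
      exact sum_congr rfl fun M hM => matchingWeight_eq_mul_erase w r c hi hM
    · refine sum_congr rfl fun k _ => ?_
      rw [sum_image, matchingSum, mul_sum]
      · exact sum_congr rfl fun M hM => matchingWeight_insert w r c hM
      · intro M hM N hN h
        rw [← erase_insert (notMem_of_mem_matchings_erase hM k), h,
          erase_insert (notMem_of_mem_matchings_erase hN k)]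
  · intro k _ l _ hkl
    simp only [Function.onFun, disjoint_left, mem_image]
    rintro _ ⟨M, hM, rfl⟩ ⟨N, _, h⟩
    have := notMem_of_mem_matchings_erase hM l
    have : (i, l) ∈ insert (i, k) M := h ▸ mem_insert_self _ _
    grind
  · simp only [disjoint_left, mem_biUnion, mem_image]
    rintro _ hM ⟨k, _, N, _, rfl⟩
    exact notMem_of_mem_matchings_erase hM k (mem_insert_self _ _)

theorem image_swap_mem_matchings {R : Finset α} {C : Finset β} {M : Finset (α × β)}
    (hM : M ∈ matchings R C) : M.image Prod.swap ∈ matchings C R := by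
  obtain ⟨hRC, hfst, hsnd⟩ := mem_matchings.mp hM
  simp only [mem_matchings, coe_image]
  exact ⟨by grind, Set.InjOn.image_of_comp hsnd, Set.InjOn.image_of_comp hfst⟩

theorem matchingSum_swap (R : Finset α) (C : Finset β) :
    matchingSum (w ∘ Prod.swap) c r C R = matchingSum w r c R C := by
  refine sum_bij' (fun M _ => M.image Prod.swap) (fun M _ => M.image Prod.swap)
    (fun M hM => image_swap_mem_matchings hM) (fun M hM => image_swap_mem_matchings hM)
    (fun M _ => by simp [image_image]) (fun M _ => by simp [image_image]) fun M _ => ?_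
  simp only [matchingWeight, image_image, Prod.swap_injective.injOn, prod_image]
  simp only [Function.comp_def, Prod.fst_swap, Prod.snd_swap, mul_comm]

theorem matchingSum_col (R : Finset α) {C : Finset β} {j : β} (hj : j ∈ C) :
    matchingSum w r c R C = c j * matchingSum w r c R (C.erase j) +
      ∑ i ∈ R, w (i, j) * matchingSum w r c (R.erase i) (C.erase j) := by
  simpa only [matchingSum_swap] using! matchingSum_row (w ∘ Prod.swap) c r R hj

variable {w r c} in
theorem matchingSum_congr {w' : α × β → K} {r' : α → K} {c' : β → K} {R : Finset α} {C : Finset β}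
    (hw : ∀ i ∈ R, ∀ j ∈ C, w (i, j) = w' (i, j)) (hr : ∀ i ∈ R, r i = r' i)
    (hc : ∀ j ∈ C, c j = c' j) : matchingSum w r c R C = matchingSum w' r' c' R C := by
  refine sum_congr rfl fun M hM => congrArg₂ _ ?_ (congrArg₂ _ ?_ ?_)
  · refine prod_congr rfl fun e he => ?_
    have := mem_product.mp ((mem_matchings.mp hM).1 he)
    exact hw _ this.1 _ this.2
  · exact prod_congr rfl fun i hi => hr i (mem_sdiff.mp hi).1
  · exact prod_congr rfl fun j hj => hc j (mem_sdiff.mp hj).1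

theorem matchingSum_add_single_row {R : Finset α} (C : Finset β) {i : α} (hi : i ∈ R) (u : K) :
    matchingSum w (r + Pi.single i u) c R C =
      matchingSum w r c R C + u * matchingSum w r c (R.erase i) C := by
  have off_row (C' : Finset β) : matchingSum w (r + Pi.single i u) c (R.erase i) C' =
      matchingSum w r c (R.erase i) C' :=
    matchingSum_congr (fun _ _ _ _ => rfl)
      (fun k hk => by simp [(mem_erase.mp hk).1]) (fun _ _ => rfl)
  simp only [matchingSum_row w _ c C hi, off_row, Pi.add_apply, Pi.single_eq_same]
  ring

theorem matchingSum_add_single_col (R : Finset α) {C : Finset β} {j : β} (hj : j ∈ C) (v : K) :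
    matchingSum w r (c + Pi.single j v) R C =
      matchingSum w r c R C + v * matchingSum w r c R (C.erase j) := by
  simpa only [matchingSum_swap] using matchingSum_add_single_row (w ∘ Prod.swap) c r R hj v

theorem matchingSum_add_single_edge {R : Finset α} {C : Finset β} {i : α} {j : β} (hi : i ∈ R)
    (hj : j ∈ C) (a : K) :
    matchingSum (w + Pi.single (i, j) a) r c R C =
      matchingSum w r c R C + a * matchingSum w r c (R.erase i) (C.erase j) := by
  have off_row (C' : Finset β) : matchingSum (w + Pi.single (i, j) a) r c (R.erase i) C' =
      matchingSum w r c (R.erase i) C' :=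
    matchingSum_congr (fun k hk l _ => by simp [(mem_erase.mp hk).1])
      (fun _ _ => rfl) (fun _ _ => rfl)
  have single_sum : ∑ k ∈ C, (Pi.single (i, j) a : α × β → K) (i, k) *
      matchingSum w r c (R.erase i) (C.erase k) =
        a * matchingSum w r c (R.erase i) (C.erase j) := by
    rw [sum_eq_single_of_mem j hj fun k _ hk => by simp [hk], Pi.single_eq_same]
  simp only [matchingSum_row _ r c C hi, off_row, Pi.add_apply, add_mul, sum_add_distrib,
    single_sum, add_assoc]

theorem matchingSum_zero_edges (R : Finset α) (C : Finset β) :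
    matchingSum 0 r c R C = (∏ i ∈ R, r i) * ∏ j ∈ C, c j := by
  rw [matchingSum, sum_eq_single_of_mem ∅ (by simp [mem_matchings])]
  · simp [matchingWeight]
  · intro M _ hM
    obtain ⟨e, he⟩ := nonempty_iff_ne_empty.mpr hM
    rw [matchingWeight, prod_eq_zero he rfl, zero_mul]

theorem exists_perm_of_mem_matchings [Fintype α] {M : Finset (α × α)}
    (hM : M ∈ matchings univ univ) (hcol : ∀ j, j ∈ M.image Prod.snd) :
    ∃ σ : Equiv.Perm α, univ.image (fun j => (σ j, j)) = M := by
  obtain ⟨-, hfst, hsnd⟩ := mem_matchings.mp hM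
  have partner (j) : ∃ i, (i, j) ∈ M := by simpa using hcol j
  choose f hf using partner
  have hf_inj : Function.Injective f := fun j k hjk => congrArg Prod.snd (hfst (hf j) (hf k) hjk)
  refine ⟨Equiv.ofBijective f (Finite.injective_iff_bijective.mp hf_inj), ?_⟩
  ext ⟨i, j⟩
  simp only [mem_image, mem_univ, true_and, Equiv.ofBijective_apply]
  constructor
  · rintro ⟨k, hk⟩
    exact hk ▸ hf k
  · exact fun hij => ⟨j, hsnd (hf j) hij rfl⟩

theorem matchingSum_zero_col [Fintype α] (A : Matrix α α K) (r : α → K) :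
    matchingSum (fun e => A e.1 e.2) r 0 univ univ = A.permanent := by
  symm
  refine sum_of_injOn (fun σ => univ.image fun j => (σ j, j)) ?_ ?_ ?_ ?_
  · intro σ _ τ _ h
    ext j
    have : (σ j, j) ∈ univ.image fun j => (τ j, j) := h.subset (mem_image_of_mem _ (mem_univ j))
    grind
  · intro σ _
    simp only [mem_coe, mem_matchings, Set.InjOn]
    grind [σ.injective]
  · intro M hM hσ
    obtain ⟨j, hj⟩ : ∃ j, j ∉ M.image Prod.snd := by
      by_contra! hcol
      obtain ⟨σ, rfl⟩ := exists_perm_of_mem_matchings hM hcol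
      exact hσ ⟨σ, by simp, rfl⟩
    rw [matchingWeight, prod_eq_zero (mem_sdiff.mpr ⟨mem_univ j, hj⟩) rfl, mul_zero, mul_zero]
  · intro σ _
    rw [matchingWeight, prod_image fun j _ k _ h => congrArg Prod.snd h]
    simp [image_image, Function.comp_def, image_univ_of_surjective σ.surjective]

end CommSemiring

section Ordered

variable [CommRing K] [LinearOrder K] [IsStrictOrderedRing K]
  {w : α × β → K} {r : α → K} {c : β → K}

theorem matchingSum_nonneg (hw : ∀ e, 0 ≤ w e) (hr : ∀ i, 0 ≤ r i) (hc : ∀ j, 0 ≤ c j)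
    (R : Finset α) (C : Finset β) : 0 ≤ matchingSum w r c R C :=
  sum_nonneg fun _ _ => mul_nonneg (prod_nonneg fun e _ => hw e)
    (mul_nonneg (prod_nonneg fun i _ => hr i) (prod_nonneg fun j _ => hc j))

theorem matchingSum_mul_erase_col_le_of_erase_row (hw : ∀ e, 0 ≤ w e) {R : Finset α}
    {i : α} (hi : i ∈ R)
    (hrow : ∀ (C : Finset β), ∀ j ∈ C, ∀ k ∈ C, j ≠ k →
      matchingSum w r c (R.erase i) C * matchingSum w r c (R.erase i) ((C.erase j).erase k) ≤
        matchingSum w r c (R.erase i) (C.erase j) * matchingSum w r c (R.erase i) (C.erase k))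
    {C : Finset β} {j : β} (hj : j ∈ C) :
    matchingSum w r c (R.erase i) C * matchingSum w r c R (C.erase j) ≤
      matchingSum w r c R C * matchingSum w r c (R.erase i) (C.erase j) := by
  rw [matchingSum_row w r c C hi, matchingSum_row w r c (C.erase j) hi, ← add_sum_erase C _ hj]
  have sum_le :
      (∑ k ∈ C.erase j, w (i, k) * matchingSum w r c (R.erase i) ((C.erase j).erase k)) *
          matchingSum w r c (R.erase i) C ≤
        (∑ k ∈ C.erase j, w (i, k) * matchingSum w r c (R.erase i) (C.erase k)) *
          matchingSum w r c (R.erase i) (C.erase j) := by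
    rw [sum_mul, sum_mul]
    refine sum_le_sum fun k hk => ?_
    obtain ⟨hkj, hkC⟩ := mem_erase.mp hk
    linarith [mul_le_mul_of_nonneg_left (hrow C j hj k hkC hkj.symm) (hw (i, k))]
  linarith [mul_nonneg (hw (i, j)) (mul_self_nonneg (matchingSum w r c (R.erase i) (C.erase j)))]

theorem matchingSum_mul_erase_erase_col_le (hw : ∀ e, 0 ≤ w e) (R : Finset α) :
    ∀ (C : Finset β), ∀ j ∈ C, ∀ k ∈ C, j ≠ k →
      matchingSum w r c R C * matchingSum w r c R ((C.erase j).erase k) ≤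
        matchingSum w r c R (C.erase j) * matchingSum w r c R (C.erase k) := by
  induction R using Finset.strongInduction with
  | H R ih =>
    intro C j hj k hk hjk
    rw [matchingSum_col w r c R hj, matchingSum_col w r c R (mem_erase.mpr ⟨hjk, hj⟩ :
      j ∈ C.erase k), erase_right_comm (a := k)]
    have sum_le :
        (∑ i ∈ R, w (i, j) * matchingSum w r c (R.erase i) (C.erase j)) *
            matchingSum w r c R ((C.erase j).erase k) ≤
          (∑ i ∈ R, w (i, j) * matchingSum w r c (R.erase i) ((C.erase j).erase k)) *
            matchingSum w r c R (C.erase j) := by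
      rw [sum_mul, sum_mul]
      refine sum_le_sum fun i hi => ?_
      have erase_row := matchingSum_mul_erase_col_le_of_erase_row hw hi (ih _ (erase_ssubset hi))
        (mem_erase.mpr ⟨hjk.symm, hk⟩)
      linarith [mul_le_mul_of_nonneg_left erase_row (hw (i, j))]
    linarith

theorem matchingSum_erase_mul_erase_le (hw : ∀ e, 0 ≤ w e) {R : Finset α} {C : Finset β} {i : α}
    {j : β} (hi : i ∈ R) (hj : j ∈ C) :
    matchingSum w r c (R.erase i) C * matchingSum w r c R (C.erase j) ≤
      matchingSum w r c R C * matchingSum w r c (R.erase i) (C.erase j) :=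
  matchingSum_mul_erase_col_le_of_erase_row hw hi (matchingSum_mul_erase_erase_col_le hw _) hj

end Ordered

end Matching


section Capacity

theorem prod_rpow_div_le_sum {E : Type*} {s : Finset E} {b y : E → ℝ} (hb : ∀ e ∈ s, 0 ≤ b e)
    (hsum : ∑ e ∈ s, b e = 1) (hy : ∀ e ∈ s, 0 ≤ y e) :
    ∏ e ∈ s, (y e / b e) ^ b e ≤ ∑ e ∈ s, y e := by
  calc ∏ e ∈ s, (y e / b e) ^ b e ≤ ∑ e ∈ s, b e * (y e / b e) :=
        Real.geom_mean_le_arith_mean_weighted s b _ hb hsum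
          fun e he => div_nonneg (hy e he) (hb e he)
    _ ≤ ∑ e ∈ s, y e := sum_le_sum fun e he => by
        rw [mul_div_left_comm]
        exact mul_le_of_le_one_right (hy e he) (div_self_le_one _)

theorem rpow_div_mul_rpow_div_le_add {p q x y : ℝ} (hp : 0 ≤ p) (hq : 0 ≤ q) (hpq : p + q = 1)
    (hx : 0 ≤ x) (hy : 0 ≤ y) : (x / p) ^ p * (y / q) ^ q ≤ x + y := by
  simpa using prod_rpow_div_le_sum (s := univ) (b := ![p, q]) (y := ![x, y])
    (by simp [Fin.forall_fin_two, hp, hq]) (by simpa using hpq)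
    (by simp [Fin.forall_fin_two, hx, hy])

theorem le_of_forall_pos_le_of_continuous {f : ℝ → ℝ} (hf : Continuous f) {x : ℝ}
    (h : ∀ ε > 0, x ≤ f ε) : x ≤ f 0 :=
  ge_of_tendsto ((hf.tendsto 0).mono_left nhdsWithin_le_nhds)
    (Filter.eventually_of_mem self_mem_nhdsWithin h : ∀ᶠ ε in nhdsWithin 0 (Set.Ioi 0), x ≤ f ε)

theorem rpow_self_pos {x : ℝ} (hx : 0 ≤ x) : 0 < x ^ x := by
  rcases hx.eq_or_lt with rfl | hx
  · simp
  · exact Real.rpow_pos_of_pos hx x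

theorem mul_one_sub_rpow_le_of_forall_of_pos {k p q b : ℝ} (hp : 0 < p) (hq : 0 < q)
    (hb0 : 0 ≤ b) (hb1 : b ≤ 1) (h : ∀ s, 0 ≤ s → k * (s / b) ^ b ≤ p + s * q) :
    k * (1 - b) ^ (1 - b) ≤ p ^ (1 - b) * q ^ b := by
  rcases hb0.eq_or_lt with rfl | hb0
  · simpa using h 0 le_rfl
  rcases hb1.eq_or_lt with rfl | hb1
  · simp only [div_one, Real.rpow_one, sub_self, Real.rpow_zero, mul_one, one_mul] at h ⊢
    refine le_of_forall_pos_le_add fun ε hε => ?_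
    have := h (p / ε) (by positivity)
    field_simp at this
    linarith
  have h1b : 0 < 1 - b := sub_pos.mpr hb1
  -- This `s` minimizes `(p + s * q) / s ^ b`.
  have tangent := h (b * (p / (1 - b)) / q) (by positivity)
  have sum_eq : p + b * (p / (1 - b)) / q * q = p / (1 - b) := by field_simp; ring
  rw [sum_eq, show b * (p / (1 - b)) / q / b = p / (1 - b) / q by field_simp,
    Real.div_rpow (by positivity) hq.le, ← mul_div_assoc, div_le_iff₀ (by positivity)] at tangent
  have key : k ≤ (p / (1 - b)) ^ (1 - b) * q ^ b := by
    rw [Real.rpow_sub (by positivity), Real.rpow_one, div_mul_eq_mul_div,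
      le_div_iff₀ (by positivity)]
    exact tangent
  rwa [Real.div_rpow hp.le h1b.le, div_mul_eq_mul_div, le_div_iff₀ (by positivity)] at key

theorem mul_one_sub_rpow_le_of_forall {k p q b : ℝ} (hp : 0 ≤ p) (hq : 0 ≤ q)
    (hb0 : 0 ≤ b) (hb1 : b ≤ 1) (h : ∀ s, 0 ≤ s → k * (s / b) ^ b ≤ p + s * q) :
    k * (1 - b) ^ (1 - b) ≤ p ^ (1 - b) * q ^ b := by
  have perturbed (ε : ℝ) (hε : 0 < ε) :
      k * (1 - b) ^ (1 - b) ≤ (p + ε) ^ (1 - b) * (q + ε) ^ b := by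
    refine mul_one_sub_rpow_le_of_forall_of_pos (by positivity) (by positivity) hb0 hb1
      fun s hs => (h s hs).trans ?_
    gcongr <;> linarith
  have continuous_bound : Continuous fun ε : ℝ => (p + ε) ^ (1 - b) * (q + ε) ^ b :=
    ((Real.continuous_rpow_const (sub_nonneg.mpr hb1)).comp (continuous_const_add p)).mul
      ((Real.continuous_rpow_const hb0).comp (continuous_const_add q))
  simpa only [add_zero] using le_of_forall_pos_le_of_continuous continuous_bound perturbed

theorem le_add_sqrt_sq {A B C D X t : ℝ} (hA : 0 ≤ A) (hB : 0 ≤ B) (hC : 0 ≤ C) (hD : 0 ≤ D)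
    (ht : 0 ≤ t) (hBC : B * C ≤ A * D)
    (h : ∀ u v, 0 ≤ u → 0 ≤ v → u * v = t ^ 2 → X ≤ A + u * B + v * C + t ^ 2 * D) :
    X ≤ (√A + t * √D) ^ 2 := by
  -- For `u * v = t ^ 2`, `u * B + v * C` is minimal at `u = t * √(C / B)`, which needs `B, C > 0`.
  have perturbed (ε : ℝ) (hε : 0 < ε) :
      X ≤ A + 2 * t * √((B + ε) * (C + ε)) + t ^ 2 * D := by
    have hBε : 0 < B + ε := by positivity
    have hCε : 0 < C + ε := by positivity
    set β := √(B + ε)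
    set γ := √(C + ε)
    have hβ : 0 < β := Real.sqrt_pos.mpr hBε
    have hγ : 0 < γ := Real.sqrt_pos.mpr hCε
    have hβ2 : β ^ 2 = B + ε := Real.sq_sqrt hBε.le
    have hγ2 : γ ^ 2 = C + ε := Real.sq_sqrt hCε.le
    calc X ≤ A + t * γ / β * B + t * β / γ * C + t ^ 2 * D :=
          h _ _ (by positivity) (by positivity) (by field_simp)
      _ ≤ A + t * γ / β * β ^ 2 + t * β / γ * γ ^ 2 + t ^ 2 * D := by
          gcongr <;> linarith
      _ = A + 2 * t * (β * γ) + t ^ 2 * D := by field_simp; ring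
      _ = A + 2 * t * √((B + ε) * (C + ε)) + t ^ 2 * D := by rw [Real.sqrt_mul hBε.le]
  calc X ≤ A + 2 * t * √((B + 0) * (C + 0)) + t ^ 2 * D :=
        le_of_forall_pos_le_of_continuous (by fun_prop) perturbed
    _ ≤ A + 2 * t * √(A * D) + t ^ 2 * D := by simp only [add_zero]; gcongr
    _ = (√A + t * √D) ^ 2 := by
        rw [add_sq, mul_pow, Real.sq_sqrt hA, Real.sq_sqrt hD, Real.sqrt_mul hA]; ring

theorem mul_rpow_div_le_sqrt_add {A B C D K b s : ℝ} (hA : 0 ≤ A) (hB : 0 ≤ B) (hC : 0 ≤ C)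
    (hD : 0 ≤ D) (hs : 0 ≤ s) (hK : 0 ≤ K) (hb : 0 ≤ b) (hBC : B * C ≤ A * D)
    (h : ∀ u v, 0 ≤ u → 0 ≤ v →
      K * ((u / b) ^ b * (v / b) ^ b) ≤ A + u * B + v * C + u * v * D) :
    √K * (s / b) ^ b ≤ √A + s * √D := by
  refine (sq_le_sq₀ (by positivity) (by positivity)).mp ?_
  rw [mul_pow, Real.sq_sqrt hK]
  refine le_add_sqrt_sq hA hB hC hD hs hBC fun u v hu hv huv => ?_
  have := h u v hu hv
  rw [← Real.mul_rpow (by positivity) (by positivity), div_mul_div_comm, huv] at this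
  rwa [sq, ← Real.mul_rpow (by positivity) (by positivity), div_mul_div_comm, ← sq]

theorem mul_rpow_mul_rpow_le_add_mul {A B C D K a b : ℝ} (hA : 0 ≤ A) (hB : 0 ≤ B) (hC : 0 ≤ C)
    (hD : 0 ≤ D) (hK : 0 ≤ K) (ha : 0 ≤ a) (hb0 : 0 ≤ b) (hb1 : b ≤ 1) (hBC : B * C ≤ A * D)
    (h : ∀ u v, 0 ≤ u → 0 ≤ v →
      K * ((u / b) ^ b * (v / b) ^ b) ≤ A + u * B + v * C + u * v * D) :
    K * ((a / b) ^ b * (1 - b) ^ (1 - b)) ≤ A + a * D := by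
  have h1b : 0 ≤ 1 - b := sub_nonneg.mpr hb1
  have root_capacity : √K * (1 - b) ^ (1 - b) ≤ √A ^ (1 - b) * √D ^ b :=
    mul_one_sub_rpow_le_of_forall (by positivity) (by positivity) hb0 hb1
      fun s hs => mul_rpow_div_le_sqrt_add hA hB hC hD hs hK hb0 hBC h
  set Q := (1 - b) ^ (1 - b)
  have hQ : 0 < Q := rpow_self_pos h1b
  have capacity : K * Q ^ 2 ≤ A ^ (1 - b) * D ^ b := by
    calc K * Q ^ 2 = (√K * Q) ^ 2 := by rw [mul_pow, Real.sq_sqrt hK]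
      _ ≤ (√A ^ (1 - b) * √D ^ b) ^ 2 := by gcongr
      _ = A ^ (1 - b) * D ^ b := by
        rw [mul_pow, Real.rpow_pow_comm (by positivity), Real.rpow_pow_comm (by positivity),
          Real.sq_sqrt hA, Real.sq_sqrt hD]
  calc K * ((a / b) ^ b * Q) = K * Q ^ 2 / Q * (a / b) ^ b := by field_simp
    _ ≤ A ^ (1 - b) * D ^ b / Q * (a / b) ^ b := by gcongr
    _ = (A / (1 - b)) ^ (1 - b) * (a * D / b) ^ b := by
      rw [Real.div_rpow hA h1b, mul_comm a, mul_div_assoc D, Real.mul_rpow hD (by positivity)]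
      ring
    _ ≤ A + a * D :=
      rpow_div_mul_rpow_div_le_add h1b hb0 (sub_add_cancel 1 b) hA (by positivity)

end Capacity

section FiberSum

variable {E γ K : Type*} [DecidableEq γ] [AddCommMonoid K] {p : E → γ}

/-- The sums of `y` over the fibres of `p : E → γ` inside `U`. For `p = Prod.fst` and
`p = Prod.snd` these are the row and column sums of the entries of `y` with index in `U`. -/
def fiberSum (p : E → γ) (U : Finset E) (y : E → K) (x : γ) : K :=
  ∑ e ∈ U with p e = x, y e

theorem fiberSum_nonneg [PartialOrder K] [IsOrderedAddMonoid K] {y : E → K} (hy : ∀ e, 0 ≤ y e)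
    (U : Finset E) (x : γ) : 0 ≤ fiberSum p U y x :=
  sum_nonneg fun e _ => hy e

theorem fiberSum_empty (y : E → K) : fiberSum p ∅ y = 0 := rfl

theorem fiberSum_fst_univ {α β : Type*} [DecidableEq α] [Fintype α] [Fintype β] (y : α × β → K)
    (i : α) : fiberSum Prod.fst univ y i = ∑ j, y (i, j) := by
  rw [fiberSum, sum_filter, Fintype.sum_prod_type_right]
  simp only [sum_ite_eq', mem_univ, if_true]

theorem fiberSum_snd_univ {α β : Type*} [DecidableEq β] [Fintype α] [Fintype β] (y : α × β → K)
    (j : β) : fiberSum Prod.snd univ y j = ∑ i, y (i, j) := by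
  rw [fiberSum, sum_filter, Fintype.sum_prod_type]
  simp only [sum_ite_eq', mem_univ, if_true]

theorem fiberSum_insert_update [DecidableEq E] {U : Finset E} {e : E} (he : e ∉ U) (y : E → K)
    (u : K) :
    fiberSum p (insert e U) (Function.update y e u) = fiberSum p U y + Pi.single (p e) u := by
  ext x
  have off_e : ∑ d ∈ U with p d = x, Function.update y e u d = ∑ d ∈ U with p d = x, y d :=
    sum_congr rfl fun d hd => Function.update_of_ne (by grind) u y
  rw [fiberSum, filter_insert, Pi.add_apply, fiberSum]
  split_ifs with hx
  · rw [sum_insert (by simp [he]), off_e, Function.update_self, ← hx, Pi.single_eq_same, add_comm]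
  · rw [off_e, Pi.single_eq_of_ne' hx, add_zero]

theorem prod_rpow_div_le_prod_fiberSum [Fintype E] [Fintype γ] {b y : E → ℝ}
    (hb : ∀ e, 0 ≤ b e) (hsum : ∀ x, fiberSum p univ b x = 1) (hy : ∀ e, 0 ≤ y e) :
    ∏ e, (y e / b e) ^ b e ≤ ∏ x, fiberSum p univ y x := by
  rw [← prod_fiberwise univ p]
  refine prod_le_prod (fun x _ => prod_nonneg fun e _ => ?_) fun x _ =>
    prod_rpow_div_le_sum (fun e _ => hb e) (hsum x) fun e _ => hy e
  exact Real.rpow_nonneg (div_nonneg (hy e) (hb e)) _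

end FiberSum

section Conversion

variable {α β : Type*} [DecidableEq α] [DecidableEq β]

theorem le_matchingSum_add_single_edge {w : α × β → ℝ} {r : α → ℝ} {c : β → ℝ} {k a b : ℝ}
    (hw : ∀ e, 0 ≤ w e) (hr : ∀ i, 0 ≤ r i) (hc : ∀ j, 0 ≤ c j) (hk : 0 ≤ k) (ha : 0 ≤ a)
    (hb0 : 0 ≤ b) (hb1 : b ≤ 1) {R : Finset α} {C : Finset β} {i : α} {j : β} (hi : i ∈ R)
    (hj : j ∈ C)
    (h : ∀ u v, 0 ≤ u → 0 ≤ v → k * ((u / b) ^ b * (v / b) ^ b) ≤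
      matchingSum w (r + Pi.single i u) (c + Pi.single j v) R C) :
    k * ((a / b) ^ b * (1 - b) ^ (1 - b)) ≤ matchingSum (w + Pi.single (i, j) a) r c R C := by
  rw [matchingSum_add_single_edge w r c hi hj]
  have nonneg := matchingSum_nonneg hw hr hc
  refine mul_rpow_mul_rpow_le_add_mul (nonneg _ _) (nonneg _ _) (nonneg _ _) (nonneg _ _) hk ha
    hb0 hb1 (matchingSum_erase_mul_erase_le hw hi hj) fun u v hu hv => (h u v hu hv).trans_eq ?_
  rw [matchingSum_add_single_row w r _ C hi, matchingSum_add_single_col w r c R hj,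
    matchingSum_add_single_col w r c (R.erase i) hj]
  ring

theorem piecewise_insert_zero {E K : Type*} [DecidableEq E] [AddZeroClass K] {S : Finset E} {e : E}
    (he : e ∉ S) (a : E → K) :
    (insert e S).piecewise a 0 = S.piecewise a 0 + Pi.single e (a e) := by
  ext d
  rw [piecewise_insert, Pi.add_apply]
  rcases eq_or_ne d e with rfl | hde
  · simp [he]
  · simp [hde]

variable [Fintype α] [Fintype β]

theorem prod_mul_prod_compl_le_matchingSum {a b : α × β → ℝ} (ha : ∀ e, 0 ≤ a e)
    (hb0 : ∀ e, 0 ≤ b e) (hb1 : ∀ e, b e ≤ 1) (hrow : ∀ i, fiberSum Prod.fst univ b i = 1)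
    (hcol : ∀ j, fiberSum Prod.snd univ b j = 1) (S : Finset (α × β)) :
    ∀ y z : α × β → ℝ, (∀ e, 0 ≤ y e) → (∀ e, 0 ≤ z e) →
      (∏ e ∈ S, (a e / b e) ^ b e * (1 - b e) ^ (1 - b e)) *
          ∏ e ∈ Sᶜ, (y e / b e) ^ b e * (z e / b e) ^ b e ≤
        matchingSum (S.piecewise a 0) (fiberSum Prod.fst Sᶜ y) (fiberSum Prod.snd Sᶜ z)
          univ univ := by
  induction S using Finset.induction_on with
  | empty =>
    intro y z hy hz
    rw [piecewise_empty, matchingSum_zero_edges, compl_empty, prod_empty, one_mul,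
      prod_mul_distrib]
    exact mul_le_mul (prod_rpow_div_le_prod_fiberSum hb0 hrow hy)
      (prod_rpow_div_le_prod_fiberSum hb0 hcol hz)
      (prod_nonneg fun e _ => Real.rpow_nonneg (div_nonneg (hz e) (hb0 e)) _)
      (prod_nonneg fun i _ => fiberSum_nonneg hy _ i)
  | insert e S he ih =>
    intro y z hy hz
    rw [← insert_compl_insert he] at ih
    set U := (insert e S)ᶜ
    have heU : e ∉ U := by simp [U]
    rw [prod_insert he, mul_assoc, mul_comm, piecewise_insert_zero he]
    refine le_matchingSum_add_single_edge
      (le_piecewise_of_le_of_le (f := a) (h := 0) S ha le_rfl) (fiberSum_nonneg hy U)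
      (fiberSum_nonneg hz U) ?_ (ha e) (hb0 e) (hb1 e) (mem_univ _) (mem_univ _)
      fun u v hu hv => ?_
    · have rpow_div_nonneg {x : α × β → ℝ} (hx : ∀ d, 0 ≤ x d) (d) : 0 ≤ (x d / b d) ^ b d :=
        Real.rpow_nonneg (div_nonneg (hx d) (hb0 d)) _
      exact mul_nonneg
        (prod_nonneg fun d _ => mul_nonneg (rpow_div_nonneg ha d)
          (Real.rpow_nonneg (sub_nonneg.mpr (hb1 d)) _))
        (prod_nonneg fun d _ => mul_nonneg (rpow_div_nonneg hy d) (rpow_div_nonneg hz d))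
    · have update_nonneg {x : α × β → ℝ} (hx : ∀ d, 0 ≤ x d) {t : ℝ} (ht : 0 ≤ t) :
          ∀ d, 0 ≤ Function.update x e t d :=
        (Function.forall_update_iff x fun _ t => 0 ≤ t).mpr ⟨ht, fun d _ => hx d⟩
      have hyp := ih (Function.update y e u) (Function.update z e v)
        (update_nonneg hy hu) (update_nonneg hz hv)
      have off_e : ∏ d ∈ U, (Function.update y e u d / b d) ^ b d *
          (Function.update z e v d / b d) ^ b d =
            ∏ d ∈ U, (y d / b d) ^ b d * (z d / b d) ^ b d :=
        prod_congr rfl fun d hd => by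
          rw [Function.update_of_ne (ne_of_mem_of_not_mem hd heU),
            Function.update_of_ne (ne_of_mem_of_not_mem hd heU)]
      rw [fiberSum_insert_update heU, fiberSum_insert_update heU, prod_insert heU, off_e,
        Function.update_self, Function.update_self] at hyp
      rwa [mul_assoc, mul_comm (∏ d ∈ U, _)]

end Conversion

theorem prod_rpow_mul_rpow_le_permanent {ι : Type*} [Fintype ι] [DecidableEq ι]
    {A B : Matrix ι ι ℝ} (hA : ∀ i j, 0 ≤ A i j) (hB : B ∈ doublyStochastic ℝ ι) :
    ∏ i, ∏ j, (A i j / B i j) ^ B i j * (1 - B i j) ^ (1 - B i j) ≤ A.permanent := by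
  have row_sum (i) : fiberSum Prod.fst univ (fun e : ι × ι => B e.1 e.2) i = 1 := by
    rw [fiberSum_fst_univ, sum_row_of_mem_doublyStochastic hB]
  have col_sum (j) : fiberSum Prod.snd univ (fun e : ι × ι => B e.1 e.2) j = 1 := by
    rw [fiberSum_snd_univ, sum_col_of_mem_doublyStochastic hB]
  have h := prod_mul_prod_compl_le_matchingSum (a := fun e => A e.1 e.2) (fun e => hA e.1 e.2)
    (fun e => nonneg_of_mem_doublyStochastic hB)
    (fun e => le_one_of_mem_doublyStochastic hB) row_sum col_sum univ 0 0
    (fun _ => le_rfl) fun _ => le_rfl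
  simpa only [compl_univ, prod_empty, mul_one, fiberSum_empty, piecewise_univ,
    matchingSum_zero_col, Fintype.prod_prod_type] using h

theorem perm_eq_permanent {n : ℕ} (A : Matrix (Fin n) (Fin n) ℝ) : perm A = A.permanent := by
  rw [← Matrix.permanent_transpose]
  rfl

theorem exp_neg_mul_log_div_eq_rpow {a b : ℝ} (ha : 0 ≤ a) (hb : 0 ≤ b) (hab : b ≠ 0 → a ≠ 0) :
    Real.exp (-if b = 0 then 0 else b * Real.log (b / a)) = (a / b) ^ b := by
  split_ifs with h
  · simp [h]
  · have hdiv : 0 < a / b := div_pos (ha.lt_of_ne' (hab h)) (hb.lt_of_ne' h)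
    rw [Real.rpow_def_of_pos hdiv, ← inv_div, Real.log_inv, mul_neg, neg_neg, mul_comm]

theorem stmt_1 {n : ℕ} (A B : Matrix (Fin n) (Fin n) ℝ)
    (hA : ∀ i j, 0 ≤ A i j)
    (hB : ∀ i j, 0 ≤ B i j)
    (hrow : ∀ i, ∑ j, B i j = 1)
    (hcol : ∀ j, ∑ i, B i j = 1)
    (hsupp : ∀ i j, B i j ≠ 0 → A i j ≠ 0) :
    perm A ≥ (∏ i, ∏ j, (1 - B i j) ^ (1 - B i j)) *
      Real.exp (-(∑ i, ∑ j, if B i j = 0 then 0 else B i j * Real.log (B i j / A i j))) := by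
  have exp_eq : Real.exp
      (-(∑ i, ∑ j, if B i j = 0 then 0 else B i j * Real.log (B i j / A i j))) =
        ∏ i, ∏ j, (A i j / B i j) ^ B i j := by
    simp only [← sum_neg_distrib, Real.exp_sum]
    exact prod_congr rfl fun i _ => prod_congr rfl fun j _ =>
      exp_neg_mul_log_div_eq_rpow (hA i j) (hB i j) (hsupp i j)
  have hB_mem : B ∈ doublyStochastic ℝ (Fin n) :=
    mem_doublyStochastic_iff_sum.mpr ⟨hB, hrow, hcol⟩
  rw [perm_eq_permanent, exp_eq, mul_comm]
  simpa only [prod_mul_distrib] using prod_rpow_mul_rpow_le_permanent hA hB_mem
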